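/- (Inverse theorem) Assume f satisfies (A1)–(A3) and fix χ > 0. There is ε₀ > 0 such that for all 0 < ε < ε₀ the following holds. Let 𝔄 be a countable family of ε-charts satisfying: (discreteness) for all t > 0 the set {Ψ_{x̂}^p ∈ 𝔄 : p > t} is finite; (relevance) for every v ∈ 𝔄 there is an ε-gpo w ∈ 𝔄^ℤ with w₀ = v that shadows a point of NUE*_χ. Let Σ, σ, Σ^# be as below and let π : Σ → M̂ assign to each ε-gpo the unique point of M̂ it shadows. If {Ψ_{x̂_n}^{p_n}}_{n∈ℤ}, {Ψ_{ŷ_n}^{q_n}}_{n∈ℤ} ∈ Σ^# satisfy π[{Ψ_{x̂_n}^{p_n}}] = π[{Ψ_{ŷ_n}^{q_n}}], then for all n ∈ ℤ: (1) d(ϑ[x̂_n], ϑ[ŷ_n]) ≤ 2 max{p_n, q_n}; (2) e^{−2√ε} ≤ u(x̂_n)/u(ŷ_n) ≤ e^{2√ε}; (3) e^{−ε^{1/3}} ≤ Q_ε(x̂_n)/Q_ε(ŷ_n) ≤ e^{ε^{1/3}}; (4) e^{−ε^{1/3}} ≤ p_n/q_n ≤ e^{ε^{1/3}}; (5) for t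 ∈ [−10Q_ε(x̂_n), 10Q_ε(x̂_n)] one has (Ψ_{ŷ_n}^{−1} ∘ Ψ_{x̂_n})(t) = t + Δ_n(t) + δ_n, where δ_n ∈ ℝ with |δ_n| < 3q_n and Δ_n is a linear function with Δ_n(0) = 0 and sup |dΔ_n| < 4√ε. -/

import Mathlib

open Real MeasureTheory Filter Topology Metric Set

noncomputable section

namespace OneDim

/-- The interval `M = [0, 1/2]`. -/
def Mset : Set ℝ := Set.Icc 0 (1/2)

/-- Data of a piecewise `C^{1+β}` interval map `f : M → M` with discontinuity set `D`,
constants `β ∈ (0,1)`, `a, K > 1`, radius function `r` and inverse branches `g`. -/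
structure GoodMap where
  f : ℝ → ℝ
  D : Set ℝ
  β : ℝ
  a : ℝ
  K : ℝ
  r : ℝ → ℝ
  g : ℝ → ℝ → ℝ
  hβ0 : 0 < β
  hβ1 : β < 1
  ha : 1 < a
  hK : 1 < K
  hmaps : ∀ x ∈ Mset, f x ∈ Mset
  hD : D ⊆ Mset
  hdiff : DifferentiableOn ℝ f (Mset \ D)

namespace GoodMap

/-- The critical set `C = {x ∈ M \ D : df_x = 0}`. -/
def crit (F : GoodMap) : Set ℝ := {x | x ∈ Mset \ F.D ∧ deriv F.f x = 0}

/-- The singular set `S = C ∪ D`. -/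
def S (F : GoodMap) : Set ℝ := F.crit ∪ F.D

/-- Distance to the singular set. -/
def dS (F : GoodMap) (x : ℝ) : ℝ := Metric.infDist x F.S

/-- Conditions (A1)–(A3). -/
def SatA (F : GoodMap) : Prop :=
  ∀ x ∈ Mset, x ∉ F.S → F.f x ∉ F.S →
    (min (F.dS x ^ F.a) (F.dS (F.f x) ^ F.a) < F.r x ∧ F.r x < 1) ∧
    -- (A1)
    (Set.InjOn F.f (Metric.ball x (2 * F.r x)) ∧
      (∀ y ∈ Metric.ball x (2 * F.r x), DifferentiableAt ℝ F.f y) ∧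
      F.g x (F.f x) = x ∧
      (∀ z ∈ Metric.ball (F.f x) (2 * F.r x), F.f (F.g x z) = z) ∧
      Set.InjOn (F.g x) (Metric.ball (F.f x) (2 * F.r x)) ∧
      (∀ z ∈ Metric.ball (F.f x) (2 * F.r x), DifferentiableAt ℝ (F.g x) z)) ∧
    -- (A2)
    ((∀ y ∈ Metric.ball x (2 * F.r x),
        F.dS x ^ F.a ≤ |deriv F.f y| ∧ |deriv F.f y| ≤ F.dS x ^ (-F.a)) ∧
      (∀ z ∈ Metric.ball (F.f x) (2 * F.r x),
        F.dS x ^ F.a ≤ |deriv (F.g x) z| ∧ |deriv (F.g x) z| ≤ F.dS x ^ (-F.a))) ∧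
    -- (A3)
    ((∀ y ∈ Metric.ball x (2 * F.r x), ∀ z ∈ Metric.ball x (2 * F.r x),
        |deriv F.f y - deriv F.f z| ≤ F.K * |y - z| ^ F.β) ∧
      (∀ y ∈ Metric.ball (F.f x) (2 * F.r x), ∀ z ∈ Metric.ball (F.f x) (2 * F.r x),
        |deriv (F.g x) y - deriv (F.g x) z| ≤ F.K * |y - z| ^ F.β))

end GoodMap

/-- Membership in the natural extension space `M̂`. -/
def inMhat (f : ℝ → ℝ) (x : ℤ → ℝ) : Prop :=
  (∀ n, x n ∈ Mset) ∧ ∀ n : ℤ, f (x (n - 1)) = x n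

/-- The natural extension map `f̂` (left shift). -/
def fhat (x : ℤ → ℝ) : ℤ → ℝ := fun n => x (n + 1)

/-- Iterate `f̂^k` of the natural extension map, `k ∈ ℤ`. -/
def fhatI (k : ℤ) (x : ℤ → ℝ) : ℤ → ℝ := fun n => x (n + k)

/-- The metric `d̂(x̂,ŷ) = sup{2^n d(x_n,y_n) : n ≤ 0}` on `M̂`. -/
def dhat (x y : ℤ → ℝ) : ℝ :=
  sSup {t : ℝ | ∃ n : ℤ, n ≤ 0 ∧ t = (2:ℝ) ^ n * |x n - y n|}

/-- The invertible derivative cocycle `d̂f^{(n)}` over `f̂`. -/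
def dfhat (f : ℝ → ℝ) (x : ℤ → ℝ) (n : ℤ) : ℝ :=
  if 0 ≤ n then ∏ j ∈ Finset.range n.toNat, deriv f (x (j : ℤ))
  else (∏ j ∈ Finset.range (-n).toNat, deriv f (x (-(j : ℤ) - 1)))⁻¹

/-- The Pesin parameter `u(x̂)`. -/
def uPes (f : ℝ → ℝ) (χ : ℝ) (x : ℤ → ℝ) : ℝ :=
  Real.sqrt (∑' n : ℕ, Real.exp (2 * (n:ℝ) * χ) * (dfhat f x (-(n:ℤ))) ^ 2)

/-- The Pesin chart `Ψ_{x̂}(t) = t/u(x̂) + x₀`. -/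
def Psi (f : ℝ → ℝ) (χ : ℝ) (x : ℤ → ℝ) (t : ℝ) : ℝ := t / uPes f χ x + x 0

/-- The set `NUE_χ`. -/
def NUE (F : GoodMap) (χ : ℝ) : Set (ℤ → ℝ) :=
  {x | inMhat F.f x ∧ (∀ n, x n ∉ F.S) ∧
    (∃ l > χ, Tendsto (fun n : ℕ => Real.log |dfhat F.f x (n:ℤ)| / (n:ℝ)) atTop (𝓝 l)) ∧
    (∃ l > χ, Tendsto (fun n : ℕ => Real.log |dfhat F.f x (-(n:ℤ))| / (-(n:ℝ))) atTop (𝓝 l))}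

/-- `ρ(x̂) = d({x₋₁,x₀,x₁}, S)`. -/
def rho (F : GoodMap) (x : ℤ → ℝ) : ℝ :=
  min (F.dS (x (-1))) (min (F.dS (x 0)) (F.dS (x 1)))

/-- `I_ε = {e^{-εn/3} : n ≥ 0}`. -/
def Ieps (ε : ℝ) : Set ℝ := {q | ∃ n : ℕ, q = Real.exp (-(ε * n) / 3)}

/-- `Q̃_ε(x̂)`. -/
def Qtilde (F : GoodMap) (χ ε : ℝ) (x : ℤ → ℝ) : ℝ :=
  ε ^ (3 / F.β) *
    min (uPes F.f χ x ^ (-(24 / F.β)))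
      (uPes F.f χ (fhatI (-1) x) ^ (-(12 / F.β)) * rho F x ^ (72 * F.a / F.β))

/-- `Q_ε(x̂) = max{q ∈ I_ε : q ≤ Q̃_ε(x̂)}`. -/
def Qeps (F : GoodMap) (χ ε : ℝ) (x : ℤ → ℝ) : ℝ :=
  sSup {q | q ∈ Ieps ε ∧ q ≤ Qtilde F χ ε x}

/-- The regular set. -/
def Reg (F : GoodMap) : Set (ℤ → ℝ) :=
  {x | inMhat F.f x ∧ (∀ n, x n ∉ F.S) ∧
    Tendsto (fun n : ℕ => Real.log (F.dS (x (n:ℤ))) / (n:ℝ)) atTop (𝓝 0) ∧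
    Tendsto (fun n : ℕ => Real.log (F.dS (x (-(n:ℤ)))) / (n:ℝ)) atTop (𝓝 0)}

/-- The set `NUE*_χ`. -/
def NUEstar (F : GoodMap) (χ : ℝ) : Set (ℤ → ℝ) :=
  {x | x ∈ NUE F χ ∧ x ∈ Reg F ∧
    (∃ nk : ℕ → ℤ, Tendsto nk atTop atBot ∧
      Tendsto (fun k => uPes F.f χ (fhatI (nk k) x)) atTop (𝓝 (uPes F.f χ x))) ∧
    Tendsto (fun n : ℕ => Real.log (uPes F.f χ (fhatI (-(n:ℤ)) x)) / (-(n:ℝ))) atTop (𝓝 0)}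

/-- An ε-chart is a pair `(x̂, p)`, representing `Ψ_{x̂}` restricted to `[-p,p]`. -/
structure Chart where
  x : ℤ → ℝ
  p : ℝ

/-- `(x̂, p)` is a genuine ε-chart. -/
def IsChart (F : GoodMap) (χ ε : ℝ) (c : Chart) : Prop :=
  c.x ∈ NUE F χ ∧ 0 < c.p ∧ c.p ≤ Qeps F χ ε c.x

/-- ε-overlap of two ε-charts. -/
def Overlap (F : GoodMap) (χ ε : ℝ) (c₁ c₂ : Chart) : Prop :=
  Real.exp (-ε) ≤ c₁.p / c₂.p ∧ c₁.p / c₂.p ≤ Real.exp ε ∧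
  |c₁.x 0 - c₂.x 0| + |(uPes F.f χ c₁.x)⁻¹ - (uPes F.f χ c₂.x)⁻¹| < (c₁.p * c₂.p) ^ 4

/-- `g_{x̂} = g_{x₋₁}`, the inverse branch of `f` taking `x₀` to `x₋₁`. -/
def ghat (F : GoodMap) (x : ℤ → ℝ) : ℝ → ℝ := F.g (x (-1))

/-- `G_{x̂} = Ψ_{f̂⁻¹x̂}⁻¹ ∘ g_{x̂} ∘ Ψ_{x̂}`. -/
def Gmap (F : GoodMap) (χ : ℝ) (x : ℤ → ℝ) (t : ℝ) : ℝ :=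
  uPes F.f χ (fhatI (-1) x) * (ghat F x (Psi F.f χ x t) - x (-1))

/-- `G_{x̂,ŷ} = Ψ_{ŷ}⁻¹ ∘ g_{x̂} ∘ Ψ_{x̂}`. -/
def Gmap2 (F : GoodMap) (χ : ℝ) (x y : ℤ → ℝ) (t : ℝ) : ℝ :=
  uPes F.f χ y * (ghat F x (Psi F.f χ x t) - y 0)

/-- `F_{x̂} = Ψ_{f̂x̂}⁻¹ ∘ f ∘ Ψ_{x̂}`. -/
def Fmap (F : GoodMap) (χ : ℝ) (x : ℤ → ℝ) (t : ℝ) : ℝ :=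
  uPes F.f χ (fhat x) * (F.f (Psi F.f χ x t) - x 1)

/-- `δ_ε = e^{-εn}` where `n` is the unique positive integer with `e^{-εn} < ε ≤ e^{-ε(n-1)}`. -/
def deltaEps (ε : ℝ) : ℝ :=
  Real.exp (-(ε * ((⌊Real.log (1 / ε) / ε⌋ + 1 : ℤ) : ℝ)))

/-- Weak edge `v ⤎ w` (from `w = Ψ_{x̂}^p` to `v = Ψ_{ŷ}^q`). -/
def WeakEdge (F : GoodMap) (χ ε : ℝ) (v w : Chart) : Prop :=
  IsChart F χ ε v ∧ IsChart F χ ε w ∧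
  Overlap F χ ε ⟨fhatI (-1) w.x, v.p⟩ v ∧
  w.p ≤ Real.exp ε * v.p

/-- Edge `v ← w` (from `w = Ψ_{x̂}^p` to `v = Ψ_{ŷ}^q`). -/
def Edge (F : GoodMap) (χ ε : ℝ) (v w : Chart) : Prop :=
  IsChart F χ ε v ∧ IsChart F χ ε w ∧
  Overlap F χ ε ⟨fhatI (-1) w.x, v.p⟩ v ∧
  |v.x 1 - w.x 0| < v.p ∧
  Real.exp (-v.p) ≤ uPes F.f χ (fhat v.x) / uPes F.f χ w.x ∧
  uPes F.f χ (fhat v.x) / uPes F.f χ w.x ≤ Real.exp v.p ∧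
  w.p = min (Real.exp ε * v.p) (deltaEps ε * Qeps F χ ε w.x)

/-- ε-generalized pseudo-orbit. -/
def IsGPO (F : GoodMap) (χ ε : ℝ) (v : ℤ → Chart) : Prop :=
  ∀ n : ℤ, Edge F χ ε (v n) (v (n + 1))

/-- weak ε-generalized pseudo-orbit. -/
def IsWeakGPO (F : GoodMap) (χ ε : ℝ) (v : ℤ → Chart) : Prop :=
  ∀ n : ℤ, WeakEdge F χ ε (v n) (v (n + 1))

/-- The range `Ψ_{x̂}([-p,p])` of an ε-chart. -/
def chartRange (F : GoodMap) (χ : ℝ) (c : Chart) : Set ℝ :=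
  Psi F.f χ c.x '' Set.Icc (-c.p) c.p

/-- A bi-infinite sequence of ε-charts shadows `x̂ ∈ M̂`. -/
def Shadows (F : GoodMap) (χ : ℝ) (v : ℤ → Chart) (x : ℤ → ℝ) : Prop :=
  inMhat F.f x ∧ ∀ n : ℤ, x n ∈ chartRange F χ (v n)

/-- `q_ε(x̂) = δ_ε inf{e^{ε|m|} Q_ε(f̂^m x̂) : m ≤ 0}`. -/
def qeps (F : GoodMap) (χ ε : ℝ) (x : ℤ → ℝ) : ℝ :=
  deltaEps ε *
    sInf {t : ℝ | ∃ m : ℤ, m ≤ 0 ∧ t = Real.exp (ε * |(m:ℝ)|) * Qeps F χ ε (fhatI m x)}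

/-- Recurrence: some symbol repeats infinitely often in the future and some in the past. -/
def Recurrent {V : Type*} (v : ℤ → V) : Prop :=
  (∃ c, {n : ℤ | 0 < n ∧ v n = c}.Infinite) ∧ ∃ c, {n : ℤ | n < 0 ∧ v n = c}.Infinite

/-- The distance `d(v,w) = exp(-min{|n| : v_n ≠ w_n})` on sequence spaces. -/
def dSigma {V : Type*} (v w : ℤ → V) : ℝ :=
  sSup {t : ℝ | ∃ n : ℤ, v n ≠ w n ∧ t = Real.exp (-|(n:ℝ)|)}

/-- Sup norm over a set. -/
def supNorm (h : ℝ → ℝ) (I : Set ℝ) : ℝ := sSup ((fun t => |h t|) '' I)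

/-- Hölder constant over a set. -/
def holConst (γ : ℝ) (h : ℝ → ℝ) (I : Set ℝ) : ℝ :=
  sSup {r : ℝ | ∃ t ∈ I, ∃ s ∈ I, t ≠ s ∧ r = |h t - h s| / |t - s| ^ γ}


/-! ### Auxiliary lemmas -/

lemma dS_nonneg (F : GoodMap) (x : ℝ) : 0 ≤ F.dS x := Metric.infDist_nonneg

lemma dS_pos (F : GoodMap) (hA : F.SatA) {x : ℝ} (hx : x ∈ Mset) (hS : x ∉ F.S)
    (hfS : F.f x ∉ F.S) : 0 < F.dS x := by
  rcases (dS_nonneg F x).lt_or_eq with h | h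
  · exact h
  exfalso
  obtain ⟨⟨hr, -⟩, -, ⟨h2, -⟩, -⟩ := hA x hx hS hfS
  have hr0 : 0 < F.r x := lt_of_le_of_lt
    (le_min (Real.rpow_nonneg (dS_nonneg F x) _) (Real.rpow_nonneg (dS_nonneg F _) _)) hr
  have hb := (h2 x (Metric.mem_ball_self (by linarith))).2
  have ha := F.ha
  rw [← h, Real.zero_rpow (by linarith)] at hb
  have hd : deriv F.f x = 0 := abs_eq_zero.1 (le_antisymm hb (abs_nonneg _))
  apply hS
  by_cases hD : x ∈ F.D
  · exact Or.inr hD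
  · exact Or.inl ⟨⟨hx, hD⟩, hd⟩

lemma S_sub (F : GoodMap) : F.S ⊆ Mset := by
  rintro y (hy | hy)
  · exact hy.1.1
  · exact F.hD hy

lemma dS_le_one (F : GoodMap) {x : ℝ} (hx : x ∈ Mset) : F.dS x ≤ 1 := by
  unfold GoodMap.dS
  rcases F.S.eq_empty_or_nonempty with h | ⟨y, hy⟩
  · rw [h, Metric.infDist_empty]; norm_num
  · refine (Metric.infDist_le_dist_of_mem hy).trans ?_
    have h1 := S_sub F hy
    unfold Mset at hx h1
    rw [Real.dist_eq, abs_le]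
    constructor <;> linarith [hx.1, hx.2, h1.1, h1.2]

lemma dS_lip (F : GoodMap) (x y : ℝ) : F.dS x ≤ F.dS y + |x - y| := by
  unfold GoodMap.dS
  rw [← Real.dist_eq]
  exact Metric.infDist_le_infDist_add_dist

/-- General term of the series defining `u²`. -/
def uterm (f : ℝ → ℝ) (χ : ℝ) (x : ℤ → ℝ) (n : ℕ) : ℝ :=
  Real.exp (2 * (n:ℝ) * χ) * (dfhat f x (-(n:ℤ))) ^ 2

lemma dfhat_neg (f : ℝ → ℝ) (x : ℤ → ℝ) (n : ℕ) :
    dfhat f x (-(n:ℤ)) = (∏ j ∈ Finset.range n, deriv f (x (-(j : ℤ) - 1)))⁻¹ := by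
  unfold dfhat
  rcases Nat.eq_zero_or_pos n with h | h
  · subst h; simp
  · rw [if_neg (by omega)]
    simp

lemma uterm_zero (f : ℝ → ℝ) (χ : ℝ) (x : ℤ → ℝ) : uterm f χ x 0 = 1 := by
  simp [uterm, dfhat]

lemma uterm_succ (f : ℝ → ℝ) (χ : ℝ) (x : ℤ → ℝ) (n : ℕ) :
    uterm f χ x (n + 1) =
      (Real.exp (2 * χ) / (deriv f (x (-1))) ^ 2) * uterm f χ (fhatI (-1) x) n := by
  unfold uterm
  rw [dfhat_neg, dfhat_neg, Finset.prod_range_succ']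
  have h1 : Real.exp (2 * ((n + 1 : ℕ) : ℝ) * χ) = Real.exp (2 * χ) * Real.exp (2 * (n:ℝ) * χ) := by
    rw [← Real.exp_add]; congr 1; push_cast; ring
  have h2 : ∀ j : ℕ, fhatI (-1) x (-(j:ℤ) - 1) = x (-((j + 1 : ℕ) : ℤ) - 1) := by
    intro j; unfold fhatI; congr 1; push_cast; ring
  simp only [h1, h2]
  simp only [Nat.cast_zero, neg_zero, zero_sub, mul_inv, mul_pow, inv_pow]
  ring

lemma uterm_nonneg (f : ℝ → ℝ) (χ : ℝ) (x : ℤ → ℝ) (n : ℕ) : 0 ≤ uterm f χ x n := by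
  unfold uterm; positivity

lemma uPes_sq (f : ℝ → ℝ) (χ : ℝ) (x : ℤ → ℝ) :
    uPes f χ x ^ 2 = ∑' n, uterm f χ x n := by
  unfold uPes
  exact Real.sq_sqrt (tsum_nonneg (uterm_nonneg f χ x))

lemma uPes_nonneg (f : ℝ → ℝ) (χ : ℝ) (x : ℤ → ℝ) : 0 ≤ uPes f χ x := Real.sqrt_nonneg _

lemma uPes_ge_one {f : ℝ → ℝ} {χ : ℝ} {x : ℤ → ℝ} (h : Summable (uterm f χ x)) :
    1 ≤ uPes f χ x := by
  have h1 : (1:ℝ) ≤ uPes f χ x ^ 2 := by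
    rw [uPes_sq, ← uterm_zero f χ x]
    exact h.le_tsum 0 (fun j _ => uterm_nonneg f χ x j)
  nlinarith [uPes_nonneg f χ x]

lemma uPes_rec {f : ℝ → ℝ} {χ : ℝ} {x : ℤ → ℝ} (h : Summable (uterm f χ x)) :
    uPes f χ x ^ 2 = 1 + (Real.exp (2 * χ) / (deriv f (x (-1))) ^ 2)
      * uPes f χ (fhatI (-1) x) ^ 2 := by
  rw [uPes_sq, uPes_sq, h.tsum_eq_zero_add, uterm_zero]
  simp_rw [uterm_succ]
  rw [tsum_mul_left]

lemma summable_pre {f : ℝ → ℝ} {χ : ℝ} {x : ℤ → ℝ} (h : Summable (uterm f χ x))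
    (hd : deriv f (x (-1)) ≠ 0) : Summable (uterm f χ (fhatI (-1) x)) := by
  have h1 := (summable_nat_add_iff 1).2 h
  simp_rw [uterm_succ] at h1
  exact (summable_mul_left_iff (by positivity)).1 h1

lemma deriv_ne (F : GoodMap) {x : ℝ} (hx : x ∈ Mset) (hS : x ∉ F.S) : deriv F.f x ≠ 0 := by
  intro h
  apply hS
  by_cases hD : x ∈ F.D
  · exact Or.inr hD
  · exact Or.inl ⟨⟨hx, hD⟩, h⟩

lemma NUE_summable {F : GoodMap} {χ : ℝ} {x : ℤ → ℝ} (hx : x ∈ NUE F χ) :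
    Summable (uterm F.f χ x) := by
  obtain ⟨-, -, -, l, hl, ht⟩ := hx
  obtain ⟨m, hm1, hm2⟩ := exists_between hl
  have hev : ∀ᶠ n : ℕ in atTop, uterm F.f χ x n ≤ Real.exp (-(2 * (m - χ))) ^ n := by
    filter_upwards [ht.eventually (lt_mem_nhds hm2), eventually_gt_atTop 0] with n hn hn0
    have hn0' : (0:ℝ) < n := by exact_mod_cast hn0
    set d := dfhat F.f x (-(n:ℤ))
    have h1 : Real.log |d| < -(n * m) := by
      rw [div_neg, lt_neg, div_lt_iff₀ hn0'] at hn
      linarith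
    have h2 : |d| ≤ Real.exp (-(n * m)) := by
      rcases eq_or_ne d 0 with h | h
      · rw [h, abs_zero]; positivity
      · rw [← Real.log_le_iff_le_exp (abs_pos.2 h)]; exact h1.le
    unfold uterm
    calc Real.exp (2 * (n:ℝ) * χ) * d ^ 2
        = Real.exp (2 * (n:ℝ) * χ) * |d| ^ 2 := by rw [sq_abs]
      _ ≤ Real.exp (2 * (n:ℝ) * χ) * Real.exp (-(n * m)) ^ 2 := by gcongr
      _ = Real.exp (-(2 * (m - χ))) ^ n := by
        rw [← Real.exp_nat_mul, ← Real.exp_nat_mul, ← Real.exp_add]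
        congr 1; push_cast; ring
  refine Summable.of_norm_bounded_eventually_nat (g := fun n => Real.exp (-(2 * (m - χ))) ^ n)
    (summable_geometric_of_lt_one (Real.exp_pos _).le (by rw [← Real.exp_zero]; exact Real.exp_lt_exp.2 (by linarith))) ?_
  filter_upwards [hev] with n hn
  rwa [Real.norm_of_nonneg (uterm_nonneg _ _ _ _)]

lemma NUE_mem {F : GoodMap} {χ : ℝ} {x : ℤ → ℝ} (hx : x ∈ NUE F χ) (n : ℤ) : x n ∈ Mset :=
  hx.1.1 n

lemma NUE_f {F : GoodMap} {χ : ℝ} {x : ℤ → ℝ} (hx : x ∈ NUE F χ) (n : ℤ) :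
    F.f (x n) = x (n + 1) := by
  have := hx.1.2 (n + 1)
  rwa [add_sub_cancel_right] at this

lemma NUE_dS_pos {F : GoodMap} (hA : F.SatA) {χ : ℝ} {x : ℤ → ℝ} (hx : x ∈ NUE F χ) (n : ℤ) :
    0 < F.dS (x n) := by
  refine dS_pos F hA (NUE_mem hx n) (hx.2.1 n) ?_
  rw [NUE_f hx]
  exact hx.2.1 _

lemma rho_pos {F : GoodMap} (hA : F.SatA) {χ : ℝ} {x : ℤ → ℝ} (hx : x ∈ NUE F χ) :
    0 < rho F x :=
  lt_min (NUE_dS_pos hA hx _) (lt_min (NUE_dS_pos hA hx _) (NUE_dS_pos hA hx _))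

lemma rho_le_one {F : GoodMap} {χ : ℝ} {x : ℤ → ℝ} (hx : x ∈ NUE F χ) :
    rho F x ≤ 1 :=
  (min_le_left _ _).trans (dS_le_one F (NUE_mem hx _))

lemma rho_le_zero (F : GoodMap) (x : ℤ → ℝ) : rho F x ≤ F.dS (x 0) :=
  (min_le_right _ _).trans (min_le_left _ _)

lemma rho_le_succ (F : GoodMap) (x : ℤ → ℝ) : rho F x ≤ F.dS (x 1) :=
  (min_le_right _ _).trans (min_le_right _ _)

lemma u_pre_ge_one {F : GoodMap} {χ : ℝ} {x : ℤ → ℝ} (hx : x ∈ NUE F χ) :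
    1 ≤ uPes F.f χ (fhatI (-1) x) :=
  uPes_ge_one (summable_pre (NUE_summable hx) (deriv_ne F (NUE_mem hx _) (hx.2.1 _)))

lemma Qtilde_pos {F : GoodMap} (hA : F.SatA) {χ ε : ℝ} (hε : 0 < ε) {x : ℤ → ℝ}
    (hx : x ∈ NUE F χ) : 0 < Qtilde F χ ε x := by
  have h1 := uPes_ge_one (NUE_summable hx)
  have h2 := u_pre_ge_one hx
  have h3 := rho_pos hA hx
  unfold Qtilde
  refine mul_pos (by positivity) (lt_min ?_ ?_)
  · exact Real.rpow_pos_of_pos (by linarith) _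
  · exact mul_pos (Real.rpow_pos_of_pos (by linarith) _) (by positivity)

lemma Qtilde_le_left {F : GoodMap} {χ ε : ℝ} (hε : 0 < ε) {x : ℤ → ℝ} :
    Qtilde F χ ε x ≤ ε ^ (3 / F.β) * uPes F.f χ x ^ (-(24 / F.β)) := by
  unfold Qtilde
  gcongr
  exact min_le_left _ _

lemma Qtilde_le_right {F : GoodMap} (hA : F.SatA) {χ ε : ℝ} (hε : 0 < ε) {x : ℤ → ℝ}
    (hx : x ∈ NUE F χ) :
    Qtilde F χ ε x ≤ ε ^ (3 / F.β) * rho F x ^ (72 * F.a / F.β) := by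
  unfold Qtilde
  gcongr
  refine (min_le_right _ _).trans ?_
  have h3 := rho_pos hA hx
  have hβ := F.hβ0
  refine mul_le_of_le_one_left (by positivity) ?_
  exact Real.rpow_le_one_of_one_le_of_nonpos (u_pre_ge_one hx)
    (neg_nonpos.2 (by positivity))

lemma Qtilde_le_one {F : GoodMap} (hA : F.SatA) {χ ε : ℝ} (hε : 0 < ε) (hε1 : ε ≤ 1) {x : ℤ → ℝ}
    (hx : x ∈ NUE F χ) : Qtilde F χ ε x ≤ 1 := by
  refine (Qtilde_le_right hA hε hx).trans ?_
  have h3 := rho_pos hA hx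
  have hβ := F.hβ0
  have ha := F.ha
  exact mul_le_one₀ (Real.rpow_le_one hε.le hε1 (by positivity)) (by positivity)
    (Real.rpow_le_one h3.le (rho_le_one hx) (by positivity))

lemma Qeps_le {F : GoodMap} (hA : F.SatA) {χ ε : ℝ} (hε : 0 < ε) {x : ℤ → ℝ}
    (hx : x ∈ NUE F χ) : Qeps F χ ε x ≤ Qtilde F χ ε x := by
  unfold Qeps
  exact Real.sSup_le (fun q hq => hq.2) (Qtilde_pos hA hε hx).le

lemma Qeps_ge {F : GoodMap} (hA : F.SatA) {χ ε : ℝ} (hε : 0 < ε) (hε1 : ε ≤ 1) {x : ℤ → ℝ}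
    (hx : x ∈ NUE F χ) : Qtilde F χ ε x ≤ Real.exp (ε / 3) * Qeps F χ ε x := by
  have hpos := Qtilde_pos hA hε hx
  have hle := Qtilde_le_one hA hε hε1 hx
  set T := Qtilde F χ ε x with hT
  have hlog : Real.log T ≤ 0 := Real.log_nonpos hpos.le hle
  set s := -(3 * Real.log T) / ε with hs
  have hs0 : 0 ≤ s := by apply div_nonneg <;> linarith
  have h1 : s ≤ (⌈s⌉₊ : ℝ) := Nat.le_ceil s
  have h2 : (⌈s⌉₊ : ℝ) < s + 1 := Nat.ceil_lt_add_one hs0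
  have hεs : ε * s = -(3 * Real.log T) := by rw [hs]; field_simp
  have hmem : Real.exp (-(ε * ⌈s⌉₊) / 3) ∈ {q | q ∈ Ieps ε ∧ q ≤ Qtilde F χ ε x} := by
    refine ⟨⟨_, rfl⟩, ?_⟩
    rw [← hT, ← Real.le_log_iff_exp_le hpos]
    have := mul_le_mul_of_nonneg_left h1 hε.le
    linarith
  have hsup : Real.exp (-(ε * ⌈s⌉₊) / 3) ≤ Qeps F χ ε x :=
    le_csSup ⟨T, fun q hq => hq.2⟩ hmem
  calc T = Real.exp (Real.log T) := (Real.exp_log hpos).symm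
    _ ≤ Real.exp (ε / 3 + -(ε * ⌈s⌉₊) / 3) := by
      apply Real.exp_le_exp.2
      have := mul_le_mul_of_nonneg_left h2.le hε.le
      linarith
    _ = Real.exp (ε / 3) * Real.exp (-(ε * ⌈s⌉₊) / 3) := Real.exp_add _ _
    _ ≤ _ := by gcongr

lemma Qeps_pos {F : GoodMap} (hA : F.SatA) {χ ε : ℝ} (hε : 0 < ε) (hε1 : ε ≤ 1) {x : ℤ → ℝ}
    (hx : x ∈ NUE F χ) : 0 < Qeps F χ ε x := by
  have h1 := Qtilde_pos hA hε hx
  have h2 := Qeps_ge hA hε hε1 hx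
  have h3 := Real.exp_pos (ε / 3)
  by_contra h
  push Not at h
  nlinarith

/-- Basic size bounds of an `ε`-chart. -/
lemma chart_bounds {F : GoodMap} (hA : F.SatA) {χ ε : ℝ} (hε : 0 < ε) (hε1 : ε ≤ 1) {c : Chart}
    (hc : IsChart F χ ε c) :
    c.p ≤ 1 ∧ c.p ≤ c.p ^ F.β ∧ c.p ^ F.β ≤ ε ^ 3 * ((uPes F.f χ c.x)⁻¹) ^ 24 ∧
      c.p ^ F.β ≤ ε ^ 3 * (rho F c.x ^ F.a) ^ 72 := by
  obtain ⟨hx, hp, hpQ⟩ := hc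
  have hβ := F.hβ0
  have hβ1 := F.hβ1
  have ha := F.ha
  have hρ := rho_pos hA hx
  have hu := uPes_ge_one (NUE_summable hx)
  have hu0 : 0 < uPes F.f χ c.x := by linarith
  have h1 : c.p ≤ Qtilde F χ ε c.x := hpQ.trans (Qeps_le hA hε hx)
  have h2 := h1.trans (Qtilde_le_one hA hε hε1 hx)
  have h3 := h1.trans (Qtilde_le_left hε)
  have h4 := h1.trans (Qtilde_le_right hA hε hx)
  have e3 : (ε ^ (3 / F.β)) ^ F.β = ε ^ 3 := by
    rw [← Real.rpow_mul hε.le, div_mul_cancel₀ _ hβ.ne']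
    exact_mod_cast Real.rpow_natCast ε 3
  refine ⟨h2, ?_, ?_, ?_⟩
  · calc c.p = c.p ^ (1:ℝ) := (Real.rpow_one _).symm
      _ ≤ c.p ^ F.β := Real.rpow_le_rpow_of_exponent_ge hp h2 hβ1.le
  · refine (Real.rpow_le_rpow hp.le h3 hβ.le).trans (le_of_eq ?_)
    rw [Real.mul_rpow (by positivity) (by positivity), e3, ← Real.rpow_mul hu0.le, neg_mul,
      div_mul_cancel₀ _ hβ.ne', Real.rpow_neg hu0.le, inv_pow]
    congr 2
    exact_mod_cast Real.rpow_natCast (uPes F.f χ c.x) 24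
  · refine (Real.rpow_le_rpow hp.le h4 hβ.le).trans (le_of_eq ?_)
    rw [Real.mul_rpow (by positivity) (by positivity), e3, ← Real.rpow_mul hρ.le,
      div_mul_cancel₀ _ hβ.ne', mul_comm 72, Real.rpow_mul hρ.le]
    congr 1
    exact_mod_cast Real.rpow_natCast (rho F c.x ^ F.a) 72

lemma chart_le_rho {F : GoodMap} (hA : F.SatA) {χ ε : ℝ} (hε : 0 < ε) (hε1 : ε ≤ 1) {c : Chart}
    (hc : IsChart F χ ε c) : c.p ≤ ε ^ 3 * rho F c.x ^ F.a ∧ c.p ≤ ε ^ 3 * rho F c.x := by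
  obtain ⟨h1, h2, h3, h4⟩ := chart_bounds hA hε hε1 hc
  have hρ := rho_pos hA hc.1
  have hρ1 := rho_le_one hc.1
  have ha := F.ha
  have hb : rho F c.x ^ F.a ≤ rho F c.x := by
    calc rho F c.x ^ F.a ≤ rho F c.x ^ (1:ℝ) :=
          Real.rpow_le_rpow_of_exponent_ge hρ hρ1 ha.le
      _ = _ := Real.rpow_one _
  have hb1 : (rho F c.x ^ F.a) ^ 72 ≤ rho F c.x ^ F.a :=
    pow_le_of_le_one (by positivity) (hb.trans hρ1) (by norm_num)
  have h5 : c.p ≤ ε ^ 3 * rho F c.x ^ F.a :=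
    (h2.trans h4).trans (by gcongr)
  exact ⟨h5, h5.trans (by gcongr)⟩

lemma range_dist {F : GoodMap} {χ ε : ℝ} {c : Chart} (hc : IsChart F χ ε c) {ζ : ℝ}
    (hζ : ζ ∈ chartRange F χ c) : |ζ - c.x 0| ≤ c.p / uPes F.f χ c.x ∧ |ζ - c.x 0| ≤ c.p := by
  obtain ⟨t, ht, rfl⟩ := hζ
  have hu := uPes_ge_one (NUE_summable hc.1)
  have hu0 : 0 < uPes F.f χ c.x := by linarith
  have h : |Psi F.f χ c.x t - c.x 0| ≤ c.p / uPes F.f χ c.x := by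
    unfold Psi
    rw [add_sub_cancel_right, abs_div, abs_of_pos hu0]
    gcongr
    exact abs_le.2 ht
  exact ⟨h, h.trans (div_le_self hc.2.1.le hu)⟩

set_option maxHeartbeats 1000000 in
/-- Core estimate along an edge. -/
lemma core {F : GoodMap} (hA : F.SatA) {χ ε : ℝ} (hε : 0 < ε) (hε1 : ε ≤ 1 / 4)
    (hεK : ε ^ 2 * (Real.exp (2 * χ) * (6 + 12 * F.K)) ≤ 1) {v w : Chart}
    (hE : Edge F χ ε v w) {ζ : ℝ} (hζ : ζ ∈ chartRange F χ v) :
    |Real.exp (2 * χ) / (deriv F.f ζ) ^ 2 * uPes F.f χ v.x ^ 2 -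
      (uPes F.f χ w.x ^ 2 - 1)| ≤ ε := by
  obtain ⟨hv, hw, ⟨-, -, hov⟩, -⟩ := hE
  have hε1' : ε ≤ 1 := by linarith
  obtain ⟨hp1, hpβ, hκu, hκρ⟩ := chart_bounds hA hε hε1' hv
  obtain ⟨hpρ, -⟩ := chart_le_rho hA hε hε1' hv
  have hζd := (range_dist hv hζ).2
  have hu := uPes_ge_one (NUE_summable hv.1)
  have hu' := u_pre_ge_one hw.1
  have hρ := rho_pos hA hv.1
  have hρ1 := rho_le_one hv.1
  have hp0 := hv.2.1
  have ha := F.ha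
  have hK := F.hK
  have hβ0 := F.hβ0
  have hβ1 := F.hβ1
  rw [uPes_rec (NUE_summable hw.1)]
  simp only at hov
  set u := uPes F.f χ v.x with hu_def
  set u' := uPes F.f χ (fhatI (-1) w.x) with hu'_def
  have hξ0 : fhatI (-1) w.x 0 = w.x (-1) := by simp [fhatI]
  rw [hξ0] at hov
  set ξ := w.x (-1) with hξ
  set q := v.p with hq
  set κ := q ^ F.β with hκ
  set b := rho F v.x ^ F.a with hb
  have hb0 : 0 < b := by positivity
  have hb1 : b ≤ 1 := Real.rpow_le_one hρ.le hρ1 (by linarith)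
  set h := min b u⁻¹ with hh
  have hu0 : 0 < u := by linarith
  have hu0' : 0 < u' := by linarith
  have hh0 : 0 < h := lt_min hb0 (by positivity)
  have hh1 : h ≤ 1 := (min_le_left _ _).trans hb1
  have hhb : h ≤ b := min_le_left _ _
  have hhu : h ≤ u⁻¹ := min_le_right _ _
  have hκ0 : 0 ≤ κ := by positivity
  have hκh : κ ≤ ε ^ 3 * h ^ 24 := by
    rcases min_choice b u⁻¹ with hc | hc
    · rw [hh, hc]
      refine hκρ.trans ?_
      gcongr ε ^ 3 * ?_
      exact pow_le_pow_of_le_one hb0.le hb1 (by norm_num)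
    · rw [hh, hc]; exact hκu
  have hq8 : (q * q) ^ 4 ≤ q := by
    calc (q * q) ^ 4 = q ^ 8 := by ring
      _ ≤ q := pow_le_of_le_one hp0.le hp1 (by norm_num)
  have hξd : |v.x 0 - ξ| ≤ q := by
    have := abs_nonneg (u'⁻¹ - u⁻¹)
    rw [abs_sub_comm]
    linarith
  have huinv : |u'⁻¹ - u⁻¹| ≤ κ := by
    have := abs_nonneg (ξ - v.x 0)
    linarith
  obtain ⟨⟨hr, -⟩, -, ⟨hA2, -⟩, ⟨hA3, -⟩⟩ := hA (v.x 0) (NUE_mem hv.1 0) (hv.1.2.1 0)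
    (by rw [NUE_f hv.1]; exact hv.1.2.1 _)
  have hbr : b < F.r (v.x 0) := by
    refine lt_of_le_of_lt (le_min ?_ ?_) hr
    · exact Real.rpow_le_rpow hρ.le (rho_le_zero F _) (by linarith)
    · rw [NUE_f hv.1]
      exact Real.rpow_le_rpow hρ.le (rho_le_succ F _) (by linarith)
  have hε3 : ε ^ 3 ≤ 1 / 64 := by
    calc ε ^ 3 ≤ (1/4) ^ 3 := by gcongr
      _ = 1 / 64 := by norm_num
  have hqb : q ≤ b := hpρ.trans (mul_le_of_le_one_left hb0.le (by linarith))
  have hζm : ζ ∈ Metric.ball (v.x 0) (2 * F.r (v.x 0)) := by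
    rw [Metric.mem_ball, Real.dist_eq]; linarith
  have hξm : ξ ∈ Metric.ball (v.x 0) (2 * F.r (v.x 0)) := by
    rw [Metric.mem_ball, Real.dist_eq, abs_sub_comm]; linarith
  have hdb : b ≤ F.dS (v.x 0) ^ F.a :=
    Real.rpow_le_rpow hρ.le (rho_le_zero F _) (by linarith)
  have hdζ : h ≤ |deriv F.f ζ| := (hhb.trans hdb).trans (hA2 ζ hζm).1
  have hdξ : h ≤ |deriv F.f ξ| := (hhb.trans hdb).trans (hA2 ξ hξm).1
  have hdd : |(|deriv F.f ζ| - |deriv F.f ξ|)| ≤ 2 * F.K * κ := by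
    refine (abs_abs_sub_abs_le _ _).trans ((hA3 ζ hζm ξ hξm).trans ?_)
    have h1 : |ζ - ξ| ≤ 2 * q := by
      have := abs_sub_le ζ (v.x 0) ξ
      linarith
    have h2 : |ζ - ξ| ^ F.β ≤ 2 * κ := by
      calc |ζ - ξ| ^ F.β ≤ (2 * q) ^ F.β := Real.rpow_le_rpow (abs_nonneg _) h1 hβ0.le
        _ = 2 ^ F.β * κ := Real.mul_rpow (by norm_num) hp0.le
        _ ≤ 2 ^ (1:ℝ) * κ := by
          refine mul_le_mul_of_nonneg_right ?_ hκ0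
          exact Real.rpow_le_rpow_of_exponent_le (by norm_num) hβ1.le
        _ = 2 * κ := by rw [Real.rpow_one]
    calc F.K * |ζ - ξ| ^ F.β ≤ F.K * (2 * κ) := by gcongr
      _ = 2 * F.K * κ := by ring
  rw [← sq_abs (deriv F.f ζ), ← sq_abs (deriv F.f ξ)]
  set A := |deriv F.f ζ|
  set B := |deriv F.f ξ|
  have hA0 : 0 < A := by linarith
  have hB0 : 0 < B := by linarith
  -- bounds on the Pesin parameters
  have hκh2 : κ ≤ h / 2 := by
    have : h ^ 24 ≤ h := pow_le_of_le_one hh0.le hh1 (by norm_num)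
    calc κ ≤ ε ^ 3 * h ^ 24 := hκh
      _ ≤ (1 / 64) * h := by gcongr
      _ ≤ h / 2 := by linarith
  have huh : u ≤ 1 / h := by
    rw [le_div_iff₀ hh0]
    calc u * h ≤ u * u⁻¹ := by gcongr
      _ = 1 := mul_inv_cancel₀ hu0.ne'
  have huh' : u' ≤ 2 / h := by
    have h1 : h / 2 ≤ u'⁻¹ := by linarith [(abs_le.1 huinv).1]
    rw [le_div_iff₀ hh0]
    have h2 : u' * (h / 2) ≤ u' * u'⁻¹ := by gcongr
    rw [mul_inv_cancel₀ hu0'.ne'] at h2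
    linarith
  have hdu : |u - u'| ≤ 2 * κ / h ^ 2 := by
    have h1 : u - u' = u * u' * (u'⁻¹ - u⁻¹) := by field_simp
    rw [h1, abs_mul, abs_of_pos (by positivity)]
    calc u * u' * |u'⁻¹ - u⁻¹| ≤ (1 / h) * (2 / h) * κ := by gcongr
      _ = _ := by field_simp
  have hm1 : |u / A - u' / B| ≤ (2 + 4 * F.K) * κ / h ^ 3 := by
    have h1 : u / A - u' / B = (u - u') / A + u' * (B - A) / (A * B) := by field_simp; ring
    rw [h1]
    refine (abs_add_le _ _).trans ?_
    rw [abs_div, abs_div, abs_mul, abs_of_pos hA0, abs_of_pos hu0', abs_of_pos (mul_pos hA0 hB0),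
      abs_sub_comm B A]
    calc |u - u'| / A + u' * |A - B| / (A * B)
        ≤ (2 * κ / h ^ 2) / h + (2 / h) * (2 * F.K * κ) / (h * h) := by gcongr
      _ = _ := by field_simp; ring
  have hm2 : |u / A + u' / B| ≤ 3 / h ^ 2 := by
    rw [abs_of_pos (by positivity)]
    calc u / A + u' / B ≤ (1 / h) / h + (2 / h) / h := by gcongr
      _ = _ := by field_simp; ring
  have hfin : Real.exp (2 * χ) / A ^ 2 * u ^ 2 -
      (1 + Real.exp (2 * χ) / B ^ 2 * u' ^ 2 - 1) =
      Real.exp (2 * χ) * ((u / A - u' / B) * (u / A + u' / B)) := by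
    field_simp; ring
  rw [hfin, abs_mul, abs_mul, abs_of_pos (Real.exp_pos _)]
  calc Real.exp (2 * χ) * (|u / A - u' / B| * |u / A + u' / B|)
      ≤ Real.exp (2 * χ) * (((2 + 4 * F.K) * κ / h ^ 3) * (3 / h ^ 2)) := by gcongr
    _ = Real.exp (2 * χ) * (6 + 12 * F.K) * (κ / h ^ 5) := by field_simp; ring
    _ ≤ Real.exp (2 * χ) * (6 + 12 * F.K) * ε ^ 3 := by
      gcongr
      rw [div_le_iff₀ (by positivity)]
      refine hκh.trans ?_
      gcongr ε ^ 3 * ?_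
      exact pow_le_pow_of_le_one hh0.le hh1 (by norm_num)
    _ = (ε ^ 2 * (Real.exp (2 * χ) * (6 + 12 * F.K))) * ε := by ring
    _ ≤ 1 * ε := by gcongr
    _ = ε := one_mul _

lemma fhatI_pre (n : ℤ) (z : ℤ → ℝ) : fhatI (-1) (fhatI n z) = fhatI (n - 1) z := by
  funext m; unfold fhatI; congr 1; ring

lemma fhatI_neg_one (n : ℤ) (z : ℤ → ℝ) : fhatI n z (-1) = z (n - 1) := by
  unfold fhatI; congr 1; ring

lemma sqrt_facts {ε : ℝ} (hε : 0 < ε) (hε1 : ε ≤ 1 / 4) :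
    0 < Real.sqrt ε ∧ Real.sqrt ε ≤ 1 / 2 ∧ Real.sqrt ε * Real.sqrt ε = ε := by
  refine ⟨Real.sqrt_pos.2 hε, ?_, Real.mul_self_sqrt hε.le⟩
  rw [Real.sqrt_le_left (by norm_num)]
  linarith

lemma edge_pred {F : GoodMap} {χ ε : ℝ} {v : ℤ → Chart} (hv : IsGPO F χ ε v) (n : ℤ) :
    Edge F χ ε (v (n - 1)) (v n) := by
  have := hv (n - 1)
  rwa [sub_add_cancel] at this

lemma z_upper {F : GoodMap} (hA : F.SatA) {χ ε : ℝ} (hε : 0 < ε) (hε1 : ε ≤ 1 / 4)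
    (hεK : ε ^ 2 * (Real.exp (2 * χ) * (6 + 12 * F.K)) ≤ 1) {v : ℤ → Chart}
    (hv : IsGPO F χ ε v) {z : ℤ → ℝ} (hz : Shadows F χ v z) (N : ℕ) :
    ∀ n : ℤ, ∑ j ∈ Finset.range N, uterm F.f χ (fhatI n z) j ≤
      Real.exp (2 * Real.sqrt ε) * uPes F.f χ (v n).x ^ 2 := by
  obtain ⟨hs0, hs1, hs2⟩ := sqrt_facts hε hε1
  induction N with
  | zero => intro n; simp only [Finset.range_zero, Finset.sum_empty]; positivity
  | succ N ih =>
    intro n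
    rw [Finset.sum_range_succ', uterm_zero]
    simp_rw [uterm_succ, fhatI_pre, fhatI_neg_one]
    rw [← Finset.mul_sum]
    have hc := (abs_le.1 (core hA hε hε1 hεK (edge_pred hv n) (hz.2 (n - 1)))).2
    have h1 := ih (n - 1)
    set a := Real.exp (2 * χ) / (deriv F.f (z (n - 1))) ^ 2
    have ha : 0 ≤ a := by positivity
    have h2 := mul_le_mul_of_nonneg_left h1 ha
    have h3 := Real.add_one_le_exp (2 * Real.sqrt ε)
    set e := Real.exp (2 * Real.sqrt ε)
    set X := uPes F.f χ (v (n - 1)).x ^ 2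
    set Y := uPes F.f χ (v n).x ^ 2
    have he : 0 < e := Real.exp_pos _
    have h4 : e * (a * X) ≤ e * (Y - 1 + ε) := by
      apply mul_le_mul_of_nonneg_left _ he.le
      linarith
    have h5 : 1 ≤ e * (1 - ε) := by
      have : (1 + 2 * Real.sqrt ε) * (1 - ε) ≤ e * (1 - ε) := by
        apply mul_le_mul_of_nonneg_right <;> linarith
      nlinarith
    nlinarith

lemma z_summable {F : GoodMap} (hA : F.SatA) {χ ε : ℝ} (hε : 0 < ε) (hε1 : ε ≤ 1 / 4)
    (hεK : ε ^ 2 * (Real.exp (2 * χ) * (6 + 12 * F.K)) ≤ 1) {v : ℤ → Chart}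
    (hv : IsGPO F χ ε v) {z : ℤ → ℝ} (hz : Shadows F χ v z) (n : ℤ) :
    Summable (uterm F.f χ (fhatI n z)) ∧ uPes F.f χ (fhatI n z) ^ 2 ≤
      Real.exp (2 * Real.sqrt ε) * uPes F.f χ (v n).x ^ 2 := by
  have h := fun N => z_upper hA hε hε1 hεK hv hz N n
  refine ⟨summable_of_sum_range_le (uterm_nonneg _ _ _) h, ?_⟩
  rw [uPes_sq (x := fhatI n z)]
  exact Real.tsum_le_of_sum_range_le (uterm_nonneg _ _ _) h

lemma exists_earlier {V : Type*} {v : ℤ → V} {c : V} (h : {n : ℤ | n < 0 ∧ v n = c}.Infinite)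
    (n : ℤ) : ∃ m < n, v m = c := by
  by_contra hcon
  push Not at hcon
  apply h
  refine (Set.finite_Icc n 0).subset ?_
  rintro m ⟨hm0, hm⟩
  refine ⟨?_, hm0.le⟩
  by_contra hlt
  exact hcon m (not_le.1 hlt) hm

/-- One-step lower bound. -/
lemma z_lower_step {F : GoodMap} (hA : F.SatA) {χ ε : ℝ} (hε : 0 < ε) (hε1 : ε ≤ 1 / 4)
    (hεK : ε ^ 2 * (Real.exp (2 * χ) * (6 + 12 * F.K)) ≤ 1) {v : ℤ → Chart}
    (hv : IsGPO F χ ε v) {z : ℤ → ℝ} (hz : Shadows F χ v z) (n : ℤ) {R : ℝ} (hR0 : 0 ≤ R)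
    (hR : R ≤ Real.exp (-(2 * Real.sqrt ε)))
    (hn : R * uPes F.f χ (v (n - 1)).x ^ 2 ≤ uPes F.f χ (fhatI (n - 1) z) ^ 2) :
    R * uPes F.f χ (v n).x ^ 2 + (1 - Real.exp (-(2 * Real.sqrt ε)) * (1 + ε)) ≤
      uPes F.f χ (fhatI n z) ^ 2 := by
  rw [uPes_rec (z_summable hA hε hε1 hεK hv hz n).1, fhatI_pre, fhatI_neg_one]
  have hc := (abs_le.1 (core hA hε hε1 hεK (edge_pred hv n) (hz.2 (n - 1)))).1
  set a := Real.exp (2 * χ) / (deriv F.f (z (n - 1))) ^ 2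
  have ha : 0 ≤ a := by positivity
  have h2 := mul_le_mul_of_nonneg_left hn ha
  have h3 : R * (uPes F.f χ (v n).x ^ 2 - 1 - ε) ≤ R * (a * uPes F.f χ (v (n - 1)).x ^ 2) := by
    apply mul_le_mul_of_nonneg_left _ hR0
    linarith
  have h4 : R * (1 + ε) ≤ Real.exp (-(2 * Real.sqrt ε)) * (1 + ε) := by gcongr
  nlinarith

lemma eta_pos {ε : ℝ} (hε : 0 < ε) (hε1 : ε ≤ 1 / 4) :
    0 < 1 - Real.exp (-(2 * Real.sqrt ε)) * (1 + ε) := by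
  obtain ⟨hs0, hs1, hs2⟩ := sqrt_facts hε hε1
  have h3 := Real.add_one_le_exp (2 * Real.sqrt ε)
  rw [Real.exp_neg, sub_pos, inv_mul_lt_iff₀ (Real.exp_pos _)]
  nlinarith

lemma z_lower_prop {F : GoodMap} (hA : F.SatA) {χ ε : ℝ} (hε : 0 < ε) (hε1 : ε ≤ 1 / 4)
    (hεK : ε ^ 2 * (Real.exp (2 * χ) * (6 + 12 * F.K)) ≤ 1) {v : ℤ → Chart}
    (hv : IsGPO F χ ε v) {z : ℤ → ℝ} (hz : Shadows F χ v z) {R : ℝ} (hR0 : 0 ≤ R)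
    (hR : R ≤ Real.exp (-(2 * Real.sqrt ε))) (m n : ℤ) (hmn : m ≤ n)
    (hm : R * uPes F.f χ (v m).x ^ 2 ≤ uPes F.f χ (fhatI m z) ^ 2) :
    R * uPes F.f χ (v n).x ^ 2 ≤ uPes F.f χ (fhatI n z) ^ 2 := by
  induction n, hmn using Int.leInduction with
  | base => exact hm
  | succ n _ ih =>
    have := z_lower_step hA hε hε1 hεK hv hz (n + 1) hR0 hR (by rwa [add_sub_cancel_right])
    linarith [eta_pos hε hε1]

lemma z_lower {F : GoodMap} (hA : F.SatA) {χ ε : ℝ} (hε : 0 < ε) (hε1 : ε ≤ 1 / 4)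
    (hεK : ε ^ 2 * (Real.exp (2 * χ) * (6 + 12 * F.K)) ≤ 1) {v : ℤ → Chart}
    (hv : IsGPO F χ ε v) (hrec : Recurrent v) {z : ℤ → ℝ} (hz : Shadows F χ v z) (n : ℤ) :
    Real.exp (-(2 * Real.sqrt ε)) * uPes F.f χ (v n).x ^ 2 ≤ uPes F.f χ (fhatI n z) ^ 2 := by
  obtain ⟨-, c, hc⟩ := hrec
  have hη := eta_pos hε hε1
  set η := 1 - Real.exp (-(2 * Real.sqrt ε)) * (1 + ε) with hηd
  set l := Real.exp (-(2 * Real.sqrt ε)) with hl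
  obtain ⟨m0, -, hm0⟩ := exists_earlier hc 0
  have hY : 0 < uPes F.f χ c.x ^ 2 := by
    have hx : c.x ∈ NUE F χ := by rw [← hm0]; exact (hv m0).1.1
    have := uPes_ge_one (NUE_summable hx)
    positivity
  set Y := uPes F.f χ c.x ^ 2 with hYd
  have hl0 : 0 < l := Real.exp_pos _
  have key : ∀ k : ℕ, ∀ n : ℤ, v n = c →
      min l (k * (η / Y)) * Y ≤ uPes F.f χ (fhatI n z) ^ 2 := by
    intro k
    induction k with
    | zero =>
      intro n _
      rw [Nat.cast_zero, zero_mul, min_eq_right hl0.le, zero_mul]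
      positivity
    | succ k ih =>
      intro n hn
      obtain ⟨m, hmn, hm⟩ := exists_earlier hc n
      have h0 : 0 ≤ min l (k * (η / Y)) := le_min hl0.le (by positivity)
      have h1 := z_lower_prop hA hε hε1 hεK hv hz h0 (min_le_left _ _) m (n - 1) (by omega)
        (by rw [hm]; exact ih m hm)
      have h2 := z_lower_step hA hε hε1 hεK hv hz n h0 (min_le_left _ _) h1
      rw [hn, ← hYd, ← hl, ← hηd] at h2
      refine le_trans ?_ h2
      have h3 : min l (((k + 1 : ℕ) : ℝ) * (η / Y)) ≤ min l (k * (η / Y)) + η / Y := by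
        have : 0 < η / Y := by positivity
        rw [← min_add_add_right]
        apply min_le_min
        · linarith
        · push_cast; linarith
      calc min l (((k + 1 : ℕ) : ℝ) * (η / Y)) * Y ≤ (min l (k * (η / Y)) + η / Y) * Y := by gcongr
        _ = _ := by field_simp
  obtain ⟨k, hk⟩ := exists_nat_ge (l / (η / Y))
  have hk' : l ≤ k * (η / Y) := by
    rwa [div_le_iff₀ (by positivity)] at hk
  obtain ⟨m, hmn, hm⟩ := exists_earlier hc n
  have h1 := key k m hm
  rw [min_eq_left hk'] at h1
  exact z_lower_prop hA hε hε1 hεK hv hz hl0.le le_rfl m n hmn.le (by rw [hm]; exact h1)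

/-- `a` and `b` agree up to a factor `e^{±θ}`. -/
def Close (θ a b : ℝ) : Prop := a ≤ Real.exp θ * b ∧ b ≤ Real.exp θ * a

lemma Close.symm {θ a b : ℝ} (h : Close θ a b) : Close θ b a := ⟨h.2, h.1⟩

lemma Close.trans {θ θ' a b c : ℝ} (h : Close θ a b) (h' : Close θ' b c) :
    Close (θ + θ') a c := by
  constructor
  · calc a ≤ Real.exp θ * b := h.1
      _ ≤ Real.exp θ * (Real.exp θ' * c) := by gcongr; exact h'.1
      _ = _ := by rw [Real.exp_add]; ring
  · calc c ≤ Real.exp θ' * b := h'.2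
      _ ≤ Real.exp θ' * (Real.exp θ * a) := by gcongr; exact h.2
      _ = _ := by rw [Real.exp_add]; ring

lemma Close.mono {θ θ' a b : ℝ} (h : Close θ a b) (ha : 0 ≤ a) (hb : 0 ≤ b) (hθ : θ ≤ θ') :
    Close θ' a b :=
  ⟨h.1.trans (by gcongr), h.2.trans (by gcongr)⟩

lemma Close.pos {θ a b : ℝ} (h : Close θ a b) (ha : 0 < a) : 0 < b := by
  have := h.1
  have h2 := Real.exp_pos θ
  by_contra hb
  push Not at hb
  nlinarith

lemma Close.min {θ a b c d : ℝ} (h : Close θ a b) (h' : Close θ c d) :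
    Close θ (min a c) (min b d) := by
  constructor
  · rw [mul_min_of_nonneg _ _ (Real.exp_pos θ).le]
    exact min_le_min h.1 h'.1
  · rw [mul_min_of_nonneg _ _ (Real.exp_pos θ).le]
    exact min_le_min h.2 h'.2

lemma Close.mul {θ θ' a b c d : ℝ} (h : Close θ a b) (h' : Close θ' c d)
    (ha : 0 ≤ a) (hb : 0 ≤ b) (hc : 0 ≤ c) (hd : 0 ≤ d) :
    Close (θ + θ') (a * c) (b * d) := by
  constructor
  · calc a * c ≤ (Real.exp θ * b) * (Real.exp θ' * d) :=
          mul_le_mul h.1 h'.1 hc (by positivity)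
      _ = _ := by rw [Real.exp_add]; ring
  · calc b * d ≤ (Real.exp θ * a) * (Real.exp θ' * c) :=
          mul_le_mul h.2 h'.2 hd (by positivity)
      _ = _ := by rw [Real.exp_add]; ring

lemma Close.mul_left {θ a b : ℝ} (h : Close θ a b) {k : ℝ} (hk : 0 ≤ k) :
    Close θ (k * a) (k * b) := by
  constructor
  · calc k * a ≤ k * (Real.exp θ * b) := by gcongr; exact h.1
      _ = _ := by ring
  · calc k * b ≤ k * (Real.exp θ * a) := by gcongr; exact h.2
      _ = _ := by ring

lemma Close.inv {θ a b : ℝ} (h : Close θ a b) (ha : 0 < a) : Close θ a⁻¹ b⁻¹ := by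
  have hb := h.pos ha
  obtain ⟨h1, h2⟩ := h
  constructor
  · rw [← div_eq_mul_inv, le_div_iff₀ hb, inv_mul_le_iff₀ ha]; linarith
  · rw [← div_eq_mul_inv, le_div_iff₀ ha, inv_mul_le_iff₀ hb]; linarith

lemma Close.rpow {θ a b e : ℝ} (h : Close θ a b) (ha : 0 < a) (he : 0 ≤ e) :
    Close (e * θ) (a ^ e) (b ^ e) := by
  have hb := h.pos ha
  have hx : Real.exp (e * θ) = Real.exp θ ^ e := by rw [← Real.exp_mul, mul_comm]
  constructor
  · rw [hx, ← Real.mul_rpow (Real.exp_pos _).le hb.le]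
    exact Real.rpow_le_rpow ha.le h.1 he
  · rw [hx, ← Real.mul_rpow (Real.exp_pos _).le ha.le]
    exact Real.rpow_le_rpow hb.le h.2 he

lemma Close.rpow_neg {θ a b e : ℝ} (h : Close θ a b) (ha : 0 < a) (he : 0 ≤ e) :
    Close (e * θ) (a ^ (-e)) (b ^ (-e)) := by
  have hb := h.pos ha
  rw [Real.rpow_neg ha.le, Real.rpow_neg hb.le]
  exact (h.rpow ha he).inv (Real.rpow_pos_of_pos ha _)

lemma Close.of_abs {t θ a b : ℝ} (ha : 0 < a) (ht0 : 0 ≤ t) (ht : t ≤ 1 / 2) (hθ : 2 * t ≤ θ)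
    (h : |a - b| ≤ t * a) : Close θ a b := by
  have hb : (1 - t) * a ≤ b := by linarith [(abs_le.1 h).2]
  have hb' : b ≤ (1 + t) * a := by linarith [(abs_le.1 h).1]
  have h1 := Real.add_one_le_exp θ
  have hb0 : 0 < b := lt_of_lt_of_le (mul_pos (by linarith) ha) hb
  constructor
  · calc a ≤ ((1 + 2 * t) * (1 - t)) * a := le_mul_of_one_le_left ha.le (by nlinarith)
      _ = (1 + 2 * t) * ((1 - t) * a) := by ring
      _ ≤ (1 + 2 * t) * b := by gcongr
      _ ≤ Real.exp θ * b := by gcongr; linarith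
  · refine hb'.trans ?_
    gcongr; linarith

lemma Close.ratio {θ a b : ℝ} (h : Close θ a b) (ha : 0 < a) :
    Real.exp (-θ) ≤ a / b ∧ a / b ≤ Real.exp θ := by
  have hb := h.pos ha
  obtain ⟨h1, h2⟩ := h
  constructor
  · rw [le_div_iff₀ hb, Real.exp_neg, inv_mul_le_iff₀ (Real.exp_pos _)]; exact h2
  · rw [div_le_iff₀ hb]; exact h1

lemma z_close {F : GoodMap} (hA : F.SatA) {χ ε : ℝ} (hε : 0 < ε) (hε1 : ε ≤ 1 / 4)
    (hεK : ε ^ 2 * (Real.exp (2 * χ) * (6 + 12 * F.K)) ≤ 1) {v : ℤ → Chart}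
    (hv : IsGPO F χ ε v) (hrec : Recurrent v) {z : ℤ → ℝ} (hz : Shadows F χ v z) (n : ℤ) :
    Close (Real.sqrt ε) (uPes F.f χ (v n).x) (uPes F.f χ (fhatI n z)) := by
  have h1 := z_lower hA hε hε1 hεK hv hrec hz n
  have h2 := (z_summable hA hε hε1 hεK hv hz n).2
  have e1 : Real.exp (2 * Real.sqrt ε) = Real.exp (Real.sqrt ε) ^ 2 := by
    rw [← Real.exp_nat_mul]; norm_num
  have hu := uPes_nonneg F.f χ (v n).x
  have hU := uPes_nonneg F.f χ (fhatI n z)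
  constructor
  · rw [Real.exp_neg, inv_mul_le_iff₀ (Real.exp_pos _), e1, ← mul_pow] at h1
    exact (sq_le_sq₀ (by positivity) (by positivity)).1 h1
  · rw [e1, ← mul_pow] at h2
    exact (sq_le_sq₀ (by positivity) (by positivity)).1 h2

lemma small_bound {ε : ℝ} (hε : 0 < ε) (hε1 : ε ≤ 1 / 4) :
    4 * ε ^ 3 ≤ 1 / 2 ∧ 2 * (4 * ε ^ 3) ≤ Real.sqrt ε := by
  obtain ⟨hs0, hs1, hs2⟩ := sqrt_facts hε hε1
  have h1 : ε ^ 2 ≤ (1 / 4) ^ 2 := by gcongr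
  have h2 : ε ≤ Real.sqrt ε := by nlinarith
  have h3 : ε ^ 3 ≤ (1 / 16) * ε := by nlinarith
  constructor <;> linarith

lemma dS_close {F : GoodMap} {ε : ℝ} (hε : 0 < ε) (hε1 : ε ≤ 1 / 4) {x y : ℝ}
    (hx : 0 < F.dS x) (h : |x - y| ≤ 4 * ε ^ 3 * F.dS x) :
    Close (Real.sqrt ε) (F.dS x) (F.dS y) := by
  obtain ⟨h1, h2⟩ := small_bound hε hε1
  refine Close.of_abs hx (by positivity) h1 h2 (le_trans ?_ h)
  rw [abs_le]
  have h3 := dS_lip F x y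
  have h4 := dS_lip F y x
  rw [abs_sub_comm] at h4
  constructor <;> linarith

set_option maxHeartbeats 1000000 in
/-- Comparison of `Q̃` at the chart and at the shadowed point. -/
lemma Qtilde_close {F : GoodMap} (hA : F.SatA) {χ ε : ℝ} (hε : 0 < ε) (hε1 : ε ≤ 1 / 4)
    (hεK : ε ^ 2 * (Real.exp (2 * χ) * (6 + 12 * F.K)) ≤ 1) {v : ℤ → Chart}
    (hv : IsGPO F χ ε v) (hrec : Recurrent v) {z : ℤ → ℝ} (hz : Shadows F χ v z) (n : ℤ) :
    Close (84 * F.a / F.β * (2 * Real.sqrt ε)) (Qtilde F χ ε (v n).x)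
      (Qtilde F χ ε (fhatI n z)) := by
  obtain ⟨hs0, hs1, hs2⟩ := sqrt_facts hε hε1
  obtain ⟨hb1, hb2⟩ := small_bound hε hε1
  have hε1' : ε ≤ 1 := by linarith
  have hβ := F.hβ0
  have ha := F.ha
  have cu := z_close hA hε hε1 hεK hv hrec hz n
  have cu1 := z_close hA hε hε1 hεK hv hrec hz (n - 1)
  obtain ⟨hc0, hc1, ⟨-, -, hov⟩, -⟩ := edge_pred hv n
  obtain ⟨-, hc2, -, hE21, -, -, hE23⟩ := hv n
  have hu := uPes_ge_one (NUE_summable hc1.1)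
  have hu0 := uPes_ge_one (NUE_summable hc0.1)
  have hup := u_pre_ge_one hc1.1
  set s := Real.sqrt ε with hs
  have hε3 : 0 < ε ^ 3 := by positivity
  obtain ⟨hp1, hpβ, hpu, -⟩ := chart_bounds hA hε hε1' hc0
  have hp0 := hc0.2.1
  have hq8 : ((v (n - 1)).p * (v (n - 1)).p) ^ 4 ≤ (v (n - 1)).p := by
    calc ((v (n - 1)).p * (v (n - 1)).p) ^ 4 = (v (n - 1)).p ^ 8 := by ring
      _ ≤ (v (n - 1)).p := pow_le_of_le_one hp0.le hp1 (by norm_num)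
  have hξ0 : fhatI (-1) (v n).x 0 = (v n).x (-1) := by simp [fhatI]
  simp only [hξ0] at hov
  -- u at the preimage
  have cup : Close s (uPes F.f χ (v (n - 1)).x) (uPes F.f χ (fhatI (-1) (v n).x)) := by
    have hi : 0 < (uPes F.f χ (v (n - 1)).x)⁻¹ := by positivity
    have h1 : Close s (uPes F.f χ (v (n - 1)).x)⁻¹ (uPes F.f χ (fhatI (-1) (v n).x))⁻¹ := by
      refine Close.of_abs hi (by positivity) hb1 hb2 ?_
      rw [abs_sub_comm]
      have h2 := abs_nonneg ((v n).x (-1) - (v (n - 1)).x 0)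
      have h3 : (uPes F.f χ (v (n - 1)).x)⁻¹ ^ 24 ≤ (uPes F.f χ (v (n - 1)).x)⁻¹ :=
        pow_le_of_le_one hi.le (inv_le_one_of_one_le₀ hu0) (by norm_num)
      have h4 : ε ^ 3 * (uPes F.f χ (v (n - 1)).x)⁻¹ ^ 24 ≤
        ε ^ 3 * (uPes F.f χ (v (n - 1)).x)⁻¹ := by gcongr
      have h5 := mul_pos hε3 hi
      linarith
    have := h1.inv hi
    rwa [inv_inv, inv_inv] at this
  have cu2 : Close (2 * s) (uPes F.f χ (fhatI (-1) (v n).x)) (uPes F.f χ (fhatI (n - 1) z)) := by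
    have := cup.symm.trans cu1
    rwa [← two_mul] at this
  -- distances to the singular set
  have hr0 := (range_dist hc0 (hz.2 (n - 1))).2
  have hr1 := (range_dist hc1 (hz.2 n)).2
  have hr2 := (range_dist hc2 (hz.2 (n + 1))).2
  have hl0 := (chart_le_rho hA hε hε1' hc0).2
  have hl1 := (chart_le_rho hA hε hε1' hc1).2
  have hd0 := NUE_dS_pos hA hc0.1 0
  have hdm := NUE_dS_pos hA hc1.1 (-1)
  have hd1 := NUE_dS_pos hA hc1.1 0
  have hd2 := NUE_dS_pos hA hc1.1 1
  have k0 : (v (n - 1)).p ≤ ε ^ 3 * F.dS ((v (n - 1)).x 0) :=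
    hl0.trans (by gcongr; exact rho_le_zero F _)
  have k1 : (v n).p ≤ ε ^ 3 * F.dS ((v n).x 0) :=
    hl1.trans (by gcongr; exact rho_le_zero F _)
  have k2 : (v n).p ≤ ε ^ 3 * F.dS ((v n).x 1) :=
    hl1.trans (by gcongr; exact rho_le_succ F _)
  have c0 : Close (2 * s) (F.dS ((v n).x (-1))) (F.dS (z (n - 1))) := by
    have h1 : Close s (F.dS ((v (n - 1)).x 0)) (F.dS (z (n - 1))) := by
      apply dS_close hε hε1 hd0
      rw [abs_sub_comm]
      have := mul_pos hε3 hd0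
      linarith
    have h2 : Close s (F.dS ((v (n - 1)).x 0)) (F.dS ((v n).x (-1))) := by
      apply dS_close hε hε1 hd0
      rw [abs_sub_comm]
      have := mul_pos hε3 hd0
      have h3 := abs_nonneg ((uPes F.f χ (fhatI (-1) (v n).x))⁻¹ - (uPes F.f χ (v (n - 1)).x)⁻¹)
      linarith
    have := h2.symm.trans h1
    rwa [← two_mul] at this
  have c1 : Close s (F.dS ((v n).x 0)) (F.dS (z n)) := by
    apply dS_close hε hε1 hd1
    rw [abs_sub_comm]
    have := mul_pos hε3 hd1
    linarith
  have c2 : Close s (F.dS ((v n).x 1)) (F.dS (z (n + 1))) := by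
    apply dS_close hε hε1 hd2
    have h1 : (v (n + 1)).p ≤ Real.exp ε * (v n).p := by rw [hE23]; exact min_le_left _ _
    have h2 : Real.exp ε ≤ 2 := by
      have h3 := Real.add_one_le_exp (-ε)
      have h4 : Real.exp (-ε) * Real.exp ε = 1 := by rw [← Real.exp_add]; simp
      nlinarith [Real.exp_pos ε]
    have h5 : (v (n + 1)).p ≤ 2 * (v n).p :=
      h1.trans (mul_le_mul_of_nonneg_right h2 hc1.2.1.le)
    have h6 := abs_sub_le ((v n).x 1) ((v (n + 1)).x 0) (z (n + 1))
    rw [abs_sub_comm ((v (n + 1)).x 0)] at h6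
    have := mul_pos hε3 hd2
    linarith
  have hzr : rho F (fhatI n z) = min (F.dS (z (n - 1))) (min (F.dS (z n)) (F.dS (z (n + 1)))) := by
    unfold rho
    rw [fhatI_neg_one]
    unfold fhatI
    rw [zero_add, add_comm 1 n]
  have cρ : Close (2 * s) (rho F (v n).x) (rho F (fhatI n z)) := by
    rw [hzr]
    unfold rho
    refine c0.min (Close.min ?_ ?_)
    · exact c1.mono hd1.le (dS_nonneg F _) (by linarith)
    · exact c2.mono hd2.le (dS_nonneg F _) (by linarith)
  have hρ := rho_pos hA hc1.1
  have hρz := cρ.pos hρ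
  have hupos : 0 < uPes F.f χ (v n).x := by linarith
  have huppos : 0 < uPes F.f χ (fhatI (-1) (v n).x) := by linarith
  have hUpos := cu.pos hupos
  have hU1pos := cu2.pos huppos
  have has : s ≤ F.a * s := le_mul_of_one_le_left hs0.le ha.le
  unfold Qtilde
  rw [fhatI_pre]
  refine Close.mul_left (Close.min ?_ ?_) (by positivity)
  · refine (cu.rpow_neg hupos (e := 24 / F.β) (by positivity)).mono (by positivity) (by positivity) ?_
    rw [div_mul_eq_mul_div, div_mul_eq_mul_div]
    gcongr ?_ / _
    linarith
  · refine ((cu2.rpow_neg huppos (e := 12 / F.β) (by positivity)).mul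
      (cρ.rpow hρ (e := 72 * F.a / F.β) (by positivity)) (by positivity) (by positivity)
      (by positivity) (by positivity)).mono (by positivity) (by positivity) ?_
    rw [div_mul_eq_mul_div, div_mul_eq_mul_div, div_mul_eq_mul_div, ← add_div]
    gcongr ?_ / _
    linarith

lemma p_compare {F : GoodMap} {χ ε : ℝ} (hε : 0 < ε) {v w : ℤ → Chart}
    (hv : IsGPO F χ ε v) (hw : IsGPO F χ ε w) (hrec : Recurrent v) {L : ℝ} (hL : 0 < L)
    (hQ : ∀ n, Qeps F χ ε (w n).x ≤ L * Qeps F χ ε (v n).x) (n : ℤ) :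
    (w n).p ≤ L * (v n).p := by
  have hδ : 0 < deltaEps ε := Real.exp_pos _
  have ev : ∀ n, (v n).p = min (Real.exp ε * (v (n - 1)).p) (deltaEps ε * Qeps F χ ε (v n).x) :=
    fun n => (edge_pred hv n).2.2.2.2.2.2
  have ew : ∀ n, (w n).p = min (Real.exp ε * (w (n - 1)).p) (deltaEps ε * Qeps F χ ε (w n).x) :=
    fun n => (edge_pred hw n).2.2.2.2.2.2
  have hp : ∀ n, 0 < (v n).p := fun n => (hv n).1.2.1
  have he : 1 < Real.exp ε := by
    rw [← Real.exp_zero]; exact Real.exp_lt_exp.2 hε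
  have hwQ : ∀ n, (w n).p ≤ L * (deltaEps ε * Qeps F χ ε (v n).x) := by
    intro n
    calc (w n).p ≤ deltaEps ε * Qeps F χ ε (w n).x := by rw [ew n]; exact min_le_right _ _
      _ ≤ deltaEps ε * (L * Qeps F χ ε (v n).x) := by gcongr; exact hQ n
      _ = _ := by ring
  obtain ⟨m, hmn, hm⟩ : ∃ m ≤ n, (v m).p = deltaEps ε * Qeps F χ ε (v m).x := by
    by_contra hcon
    push Not at hcon
    obtain ⟨-, c, hc⟩ := hrec
    have hstep : ∀ m ≤ n, (v (m - 1)).p < (v m).p := by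
      intro m hm
      have h1 : (v m).p = Real.exp ε * (v (m - 1)).p := by
        rcases min_choice (Real.exp ε * (v (m - 1)).p) (deltaEps ε * Qeps F χ ε (v m).x)
          with h | h
        · rw [ev m, h]
        · exact absurd (by rw [ev m, h]) (hcon m hm)
      rw [h1]
      nlinarith [hp (m - 1)]
    obtain ⟨m1, hm1n, hm1⟩ := exists_earlier hc n
    obtain ⟨m2, hm21, hm2⟩ := exists_earlier hc m1
    have hmono : ∀ m, m2 ≤ m → m ≤ n → (v m2).p ≤ (v m).p := by
      intro m hm
      induction m, hm using Int.leInduction with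
      | base => intro _; exact le_rfl
      | succ m _ ih =>
        intro hmn
        have := hstep (m + 1) hmn
        rw [add_sub_cancel_right] at this
        exact (ih (by omega)).trans this.le
    have h1 := hmono (m1 - 1) (by omega) (by omega)
    have h2 := hstep m1 hm1n.le
    rw [hm2] at h1
    rw [hm1] at h2
    linarith
  induction n, hmn using Int.leInduction with
  | base => rw [hm]; exact hwQ m
  | succ n _ ih =>
    rw [ev (n + 1), mul_min_of_nonneg _ _ hL.le]
    refine le_min ?_ (hwQ _)
    rw [add_sub_cancel_right]
    calc (w (n + 1)).p ≤ Real.exp ε * (w n).p := by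
          have := ew (n + 1)
          rw [add_sub_cancel_right] at this
          rw [this]; exact min_le_left _ _
      _ ≤ Real.exp ε * (L * (v n).p) := by gcongr
      _ = _ := by ring

lemma exists_eps (k E : ℝ) : ∃ ε₀ > 0, ∀ ε : ℝ, 0 < ε → ε < ε₀ →
    ε ≤ 1 / 4 ∧ ε ^ 2 * k ≤ 1 ∧
      2 * (E * (2 * Real.sqrt ε)) + ε / 3 ≤ ε ^ ((1:ℝ)/3) ∧
      ε ^ ((1:ℝ)/3) + 2 * Real.sqrt ε ≤ 1 / 2 := by
  have t1 : ∀ᶠ ε : ℝ in 𝓝 0, ε < 1 / 4 := gt_mem_nhds (by norm_num)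
  have c2 : Continuous (fun ε : ℝ => ε ^ 2 * k) := by fun_prop
  have t2 : ∀ᶠ ε : ℝ in 𝓝 0, ε ^ 2 * k < 1 :=
    (c2.tendsto 0).eventually (gt_mem_nhds (by norm_num))
  have c6 : Continuous (fun ε : ℝ => ε ^ ((1:ℝ)/6)) := Real.continuous_rpow_const (by norm_num)
  have c23 : Continuous (fun ε : ℝ => ε ^ ((2:ℝ)/3)) := Real.continuous_rpow_const (by norm_num)
  have c13 : Continuous (fun ε : ℝ => ε ^ ((1:ℝ)/3)) := Real.continuous_rpow_const (by norm_num)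
  have c3 : Continuous (fun ε : ℝ => 4 * E * ε ^ ((1:ℝ)/6) + ε ^ ((2:ℝ)/3) / 3) := by fun_prop
  have c4 : Continuous (fun ε : ℝ => ε ^ ((1:ℝ)/3) + 2 * Real.sqrt ε) := by fun_prop
  have t3 : ∀ᶠ ε : ℝ in 𝓝 0, 4 * E * ε ^ ((1:ℝ)/6) + ε ^ ((2:ℝ)/3) / 3 < 1 := by
    refine (c3.tendsto 0).eventually (gt_mem_nhds ?_)
    rw [Real.zero_rpow (by norm_num), Real.zero_rpow (by norm_num)]
    norm_num
  have t4 : ∀ᶠ ε : ℝ in 𝓝 0, ε ^ ((1:ℝ)/3) + 2 * Real.sqrt ε < 1 / 2 := by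
    refine (c4.tendsto 0).eventually (gt_mem_nhds ?_)
    rw [Real.zero_rpow (by norm_num), Real.sqrt_zero]
    norm_num
  obtain ⟨ε₀, h0, h⟩ := Metric.eventually_nhds_iff.1 (t1.and (t2.and (t3.and t4)))
  refine ⟨ε₀, h0, fun ε hε hlt => ?_⟩
  obtain ⟨a1, a2, a3, a4⟩ := @h ε (by rwa [Real.dist_eq, sub_zero, abs_of_pos hε])
  refine ⟨a1.le, a2.le, ?_, a4.le⟩
  have e1 : Real.sqrt ε = ε ^ ((1:ℝ)/3) * ε ^ ((1:ℝ)/6) := by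
    rw [Real.sqrt_eq_rpow, ← Real.rpow_add hε]; norm_num
  have e2 : ε = ε ^ ((1:ℝ)/3) * ε ^ ((2:ℝ)/3) := by
    rw [← Real.rpow_add hε]; norm_num
  have hpos : 0 < ε ^ ((1:ℝ)/3) := by positivity
  calc 2 * (E * (2 * Real.sqrt ε)) + ε / 3
      = 2 * (E * (2 * (ε ^ ((1:ℝ)/3) * ε ^ ((1:ℝ)/6)))) + (ε ^ ((1:ℝ)/3) * ε ^ ((2:ℝ)/3)) / 3 := by
        rw [← e1, ← e2]
    _ = ε ^ ((1:ℝ)/3) * (4 * E * ε ^ ((1:ℝ)/6) + ε ^ ((2:ℝ)/3) / 3) := by ring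
    _ ≤ ε ^ ((1:ℝ)/3) * 1 := by gcongr
    _ = _ := mul_one _

/-- the inverse theorem (Theorem 4.1). -/
theorem inverse_theorem (F : GoodMap) (hA : F.SatA) (χ : ℝ) (hχ : 0 < χ) :
    ∃ ε₀ > 0, ∀ ε : ℝ, 0 < ε → ε < ε₀ →
      ∀ A : Set Chart, A.Countable → (∀ c ∈ A, IsChart F χ ε c) →
      -- discreteness
      (∀ t : ℝ, 0 < t → {c ∈ A | t < c.p}.Finite) →
      -- relevance
      (∀ c ∈ A, ∃ w : ℤ → Chart, (∀ n, w n ∈ A) ∧ IsGPO F χ ε w ∧ w 0 = c ∧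
        ∃ x ∈ NUEstar F χ, Shadows F χ w x) →
      ∀ v w : ℤ → Chart, (∀ n, v n ∈ A) → (∀ n, w n ∈ A) →
        IsGPO F χ ε v → IsGPO F χ ε w → Recurrent v → Recurrent w →
        ∀ z : ℤ → ℝ, Shadows F χ v z → Shadows F χ w z →
        ∀ n : ℤ,
          -- (1)
          |(v n).x 0 - (w n).x 0| ≤ 2 * max (v n).p (w n).p ∧
          -- (2)
          (Real.exp (-(2 * Real.sqrt ε)) ≤ uPes F.f χ (v n).x / uPes F.f χ (w n).x ∧
            uPes F.f χ (v n).x / uPes F.f χ (w n).x ≤ Real.exp (2 * Real.sqrt ε)) ∧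
          -- (3)
          (Real.exp (-(ε ^ ((1:ℝ)/3))) ≤ Qeps F χ ε (v n).x / Qeps F χ ε (w n).x ∧
            Qeps F χ ε (v n).x / Qeps F χ ε (w n).x ≤ Real.exp (ε ^ ((1:ℝ)/3))) ∧
          -- (4)
          (Real.exp (-(ε ^ ((1:ℝ)/3))) ≤ (v n).p / (w n).p ∧
            (v n).p / (w n).p ≤ Real.exp (ε ^ ((1:ℝ)/3))) ∧
          -- (5)
          (∃ δ c : ℝ, |δ| < 3 * (w n).p ∧ |c| < 4 * Real.sqrt ε ∧
            ∀ t ∈ Set.Icc (-(10 * Qeps F χ ε (v n).x)) (10 * Qeps F χ ε (v n).x),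
              uPes F.f χ (w n).x * (Psi F.f χ (v n).x t - (w n).x 0) = t + c * t + δ) := by
  have hK := F.hK
  obtain ⟨ε₀, hε₀, H⟩ := exists_eps (Real.exp (2 * χ) * (6 + 12 * F.K)) (84 * F.a / F.β)
  refine ⟨ε₀, hε₀, fun ε hε hlt A _ _ _ _ v w _ _ hv hw hrv hrw z hzv hzw => ?_⟩
  obtain ⟨hε1, hεK, hε3, hε4⟩ := H ε hε hlt
  have hε1' : ε ≤ 1 := by linarith
  obtain ⟨hs0, hs1, hs2⟩ := sqrt_facts hε hε1
  have ht0 : 0 < ε ^ ((1:ℝ)/3) := by positivity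
  set s := Real.sqrt ε with hs
  set t := ε ^ ((1:ℝ)/3) with ht
  have cu : ∀ n, Close (2 * s) (uPes F.f χ (v n).x) (uPes F.f χ (w n).x) := by
    intro n
    have := (z_close hA hε hε1 hεK hv hrv hzv n).trans (z_close hA hε hε1 hεK hw hrw hzw n).symm
    rwa [← two_mul] at this
  have hQv : ∀ n, 0 < Qeps F χ ε (v n).x := fun n => Qeps_pos hA hε hε1' (hv n).1.1
  have hQw : ∀ n, 0 < Qeps F χ ε (w n).x := fun n => Qeps_pos hA hε hε1' (hw n).1.1
  have cQ : ∀ n, Close t (Qeps F χ ε (v n).x) (Qeps F χ ε (w n).x) := by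
    intro n
    have h := (Qtilde_close hA hε hε1 hεK hv hrv hzv n).trans
      (Qtilde_close hA hε hε1 hεK hw hrw hzw n).symm
    rw [← two_mul] at h
    have hx : Real.exp (2 * (84 * F.a / F.β * (2 * s))) * Real.exp (ε / 3) ≤ Real.exp t := by
      rw [← Real.exp_add]; exact Real.exp_le_exp.2 hε3
    constructor
    · calc Qeps F χ ε (v n).x ≤ Qtilde F χ ε (v n).x := Qeps_le hA hε (hv n).1.1
        _ ≤ _ := h.1
        _ ≤ Real.exp (2 * (84 * F.a / F.β * (2 * s))) *
            (Real.exp (ε / 3) * Qeps F χ ε (w n).x) := by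
          gcongr; exact Qeps_ge hA hε hε1' (hw n).1.1
        _ = (Real.exp (2 * (84 * F.a / F.β * (2 * s))) * Real.exp (ε / 3)) *
            Qeps F χ ε (w n).x := by ring
        _ ≤ _ := mul_le_mul_of_nonneg_right hx (hQw n).le
    · calc Qeps F χ ε (w n).x ≤ Qtilde F χ ε (w n).x := Qeps_le hA hε (hw n).1.1
        _ ≤ _ := h.2
        _ ≤ Real.exp (2 * (84 * F.a / F.β * (2 * s))) *
            (Real.exp (ε / 3) * Qeps F χ ε (v n).x) := by
          gcongr; exact Qeps_ge hA hε hε1' (hv n).1.1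
        _ = (Real.exp (2 * (84 * F.a / F.β * (2 * s))) * Real.exp (ε / 3)) *
            Qeps F χ ε (v n).x := by ring
        _ ≤ _ := mul_le_mul_of_nonneg_right hx (hQv n).le
  intro n
  have cp : Close t (v n).p (w n).p :=
    ⟨p_compare hε hw hv hrw (Real.exp_pos t) (fun n => (cQ n).1) n,
      p_compare hε hv hw hrv (Real.exp_pos t) (fun n => (cQ n).2) n⟩
  have hpv := (hv n).1.2.1
  have hpw := (hw n).1.2.1
  have hu : 0 < uPes F.f χ (v n).x := lt_of_lt_of_le one_pos (uPes_ge_one (NUE_summable (hv n).1.1))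
  have hu' : 0 < uPes F.f χ (w n).x :=
    lt_of_lt_of_le one_pos (uPes_ge_one (NUE_summable (hw n).1.1))
  obtain ⟨rv, rv1⟩ := range_dist (hv n).1 (hzv.2 n)
  obtain ⟨rw0, rw1⟩ := range_dist (hw n).1 (hzw.2 n)
  have htri := abs_sub_le ((v n).x 0) (z n) ((w n).x 0)
  rw [abs_sub_comm ((v n).x 0) (z n)] at htri
  refine ⟨?_, (cu n).ratio hu, (cQ n).ratio (hQv n), cp.ratio hpv, ?_⟩
  · linarith [le_max_left (v n).p (w n).p, le_max_right (v n).p (w n).p]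
  · refine ⟨uPes F.f χ (w n).x * ((v n).x 0 - (w n).x 0),
      uPes F.f χ (w n).x / uPes F.f χ (v n).x - 1, ?_, ?_, ?_⟩
    · rw [abs_mul, abs_of_pos hu']
      have h1 : uPes F.f χ (w n).x * ((v n).p / uPes F.f χ (v n).x) ≤
          Real.exp (2 * s) * (v n).p := by
        rw [mul_div_assoc', div_le_iff₀ hu]
        calc uPes F.f χ (w n).x * (v n).p ≤ (Real.exp (2 * s) * uPes F.f χ (v n).x) * (v n).p :=
              mul_le_mul_of_nonneg_right (cu n).2 hpv.le
          _ = _ := by ring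
      have h2 : uPes F.f χ (w n).x * ((w n).p / uPes F.f χ (w n).x) = (w n).p := by
        field_simp
      have h3 : Real.exp (2 * s) * (v n).p ≤ Real.exp (t + 2 * s) * (w n).p := by
        calc Real.exp (2 * s) * (v n).p ≤ Real.exp (2 * s) * (Real.exp t * (w n).p) := by
              gcongr; exact cp.1
          _ = _ := by rw [Real.exp_add]; ring
      have h4 : Real.exp (t + 2 * s) < 2 := by
        have h5 := Real.add_one_lt_exp (x := -(t + 2 * s)) (by linarith)
        have h6 : Real.exp (-(t + 2 * s)) * Real.exp (t + 2 * s) = 1 := by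
          rw [← Real.exp_add]; simp
        nlinarith [Real.exp_pos (t + 2 * s)]
      have h7 : Real.exp (t + 2 * s) * (w n).p < 2 * (w n).p := mul_lt_mul_of_pos_right h4 hpw
      calc uPes F.f χ (w n).x * |(v n).x 0 - (w n).x 0|
          ≤ uPes F.f χ (w n).x *
            ((v n).p / uPes F.f χ (v n).x + (w n).p / uPes F.f χ (w n).x) := by
            gcongr; linarith
        _ = uPes F.f χ (w n).x * ((v n).p / uPes F.f χ (v n).x) +
            uPes F.f χ (w n).x * ((w n).p / uPes F.f χ (w n).x) := by ring
        _ < 3 * (w n).p := by linarith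
    · obtain ⟨h1, h2⟩ := (cu n).symm.ratio hu'
      have h3 := Real.add_one_le_exp (-(2 * s))
      have h4 : Real.exp (-(2 * s)) * Real.exp (2 * s) = 1 := by
        rw [← Real.exp_add]; simp
      have h5 : Real.exp (2 * s) < 1 + 4 * s := by
        by_contra hc
        push Not at hc
        have h6 : (1 - 2 * s) * (1 + 4 * s) ≤ Real.exp (-(2 * s)) * Real.exp (2 * s) :=
          mul_le_mul (by linarith) hc (by linarith) (Real.exp_pos _).le
        nlinarith
      rw [abs_lt]
      constructor <;> linarith
    · intro r _
      unfold Psi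
      field_simp
      ring

end OneDim
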